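/- There do not exist a matrix M ∈ S(G117) and real numbers λ_1 < λ_2 < λ_3 such that the characteristic polynomial of M equals (X − λ_1) (X − λ_2)^3 (X − λ_3)^2, and there do not exist such M and λ_1 < λ_2 < λ_3 with characteristic polynomial (X − λ_1)^2 (X − λ_2)^3 (X − λ_3). That is, G117 attains neither ordered multiplicity list (1,3,2) nor (2,3,1). -/

import Mathlib

/-!
Vertices are named by their index in `Fin 6`: the centre is `1`, the pendant vertex `0`, and the
triangles are completed by `{2, 3}` and `{4, 5}`.

Suppose a matrix `M ∈ S(G117)` has an eigenvalue `l` of multiplicity at least three.  Looking at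
kernel vectors of `N = M - l` that vanish at two prescribed vertices, one finds that both triangle
blocks `N[2,3]` and `N[4,5]` are singular, that the entry at the pendant vertex is nonzero, and that
`N` is the matrix of a quadratic form with only three squares
(`G117_normal_form`):
`xᵀ N x = a (x₀ + g x₁)² + p (x₂ + t x₃ + c x₁)² + q (x₄ + s x₅ + e x₁)²`,
with all eight parameters nonzero.

If `M` has a further eigenvalue `m` of multiplicity at least two, the eigenvectors for `m`
vanishing at one prescribed vertex force `m - l = a = p (1 + t²) = q (1 + s²)`
(`G117_double_eigenvalue`).  Then the form above is semidefinite, with the sign of `m - l`, so no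
eigenvalue of `M` can lie strictly on the other side of `l`.  Both multiplicity lists
`(1,3,2)` and `(2,3,1)` require such an eigenvalue.
-/

open Polynomial Matrix

/-- `M ∈ S(G)`: real symmetric matrix whose off-diagonal nonzero pattern is
given exactly by the adjacency of `G`. -/
def inS {V : Type*} (G : SimpleGraph V) (M : Matrix V V ℝ) : Prop :=
  M.IsSymm ∧ ∀ i j : V, i ≠ j → (M i j ≠ 0 ↔ G.Adj i j)

/-- The graph `G117` on vertices 1..6 (encoded as `Fin 6`, vertex `v` is `v.val + 1`). -/
def G117 : SimpleGraph (Fin 6) :=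
  SimpleGraph.fromRel (fun i j =>
    ((i : ℕ) + 1, (j : ℕ) + 1) ∈ [(1, 2), (2, 3), (2, 4), (2, 5), (2, 6), (3, 4), (5, 6)])

/-! ### Eigenspaces of real symmetric matrices -/

/-- The eigenspace of a matrix acting on Euclidean space. -/
noncomputable abbrev eigsp (M : Matrix (Fin 6) (Fin 6) ℝ) (l : ℝ) :
    Submodule ℝ (EuclideanSpace ℝ (Fin 6)) :=
  Module.End.eigenspace (Matrix.toEuclideanLin M) l

/-- Geometric and algebraic multiplicities agree, since a real symmetric matrix is semisimple. -/
lemma le_finrank_eigsp {M : Matrix (Fin 6) (Fin 6) ℝ} (hM : M.IsSymm) {l : ℝ} {n : ℕ}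
    (h : (X - C l) ^ n ∣ M.charpoly) : n ≤ Module.finrank ℝ (eigsp M l) := by
  have hH : M.IsHermitian := by
    rw [Matrix.IsHermitian, Matrix.conjTranspose_eq_transpose_of_trivial]; exact hM
  have hs : (Matrix.toEuclideanLin M).IsSymmetric := Matrix.isSymmetric_toEuclideanLin_iff.2 hH
  have hc : (Matrix.toEuclideanLin M).charpoly = M.charpoly := by
    rw [Matrix.toEuclideanLin_eq_toLin_orthonormal, Matrix.charpoly_toLin]
  have := LinearMap.finrank_maxGenEigenspace_eq (Matrix.toEuclideanLin M) l
  rw [hs.isFinitelySemisimple.maxGenEigenspace_eq_eigenspace, hc] at this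
  rw [eigsp, this, Polynomial.le_rootMultiplicity_iff M.charpoly_monic.ne_zero]
  exact h

lemma mem_eigsp {M : Matrix (Fin 6) (Fin 6) ℝ} {l : ℝ} {x : EuclideanSpace ℝ (Fin 6)}
    (h : x ∈ eigsp M l) (i : Fin 6) : ∑ j, M i j * x j = l * x i := by
  rw [Module.End.mem_eigenspace_iff] at h
  have := congrArg (fun v : EuclideanSpace ℝ (Fin 6) => v i) h
  simpa [Matrix.mulVec, dotProduct] using this

/-- An eigenspace of dimension larger than `k` contains a nonzero vector vanishing at
`k` prescribed vertices. -/
lemma exists_eigvec {M : Matrix (Fin 6) (Fin 6) ℝ} {l : ℝ} {k : ℕ}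
    (h : k < Module.finrank ℝ (eigsp M l)) (v : Fin k → Fin 6) :
    ∃ x : Fin 6 → ℝ, x ≠ 0 ∧ (∀ i, x (v i) = 0) ∧ ∀ i, ∑ j, M i j * x j = l * x i := by
  let f : eigsp M l →ₗ[ℝ] (Fin k → ℝ) :=
    LinearMap.pi fun i => (EuclideanSpace.proj (𝕜 := ℝ) (v i)).toLinearMap ∘ₗ (eigsp M l).subtype
  have hf : LinearMap.ker f ≠ ⊥ := f.ker_ne_bot_of_finrank_lt (by simpa using h)
  obtain ⟨x, hx, hx0⟩ := (Submodule.ne_bot_iff _).1 hf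
  refine ⟨fun i => x.1 i, fun h0 => hx0 ?_, fun i => ?_, mem_eigsp x.2⟩
  · ext i
    exact congrFun h0 i
  · exact congrFun (LinearMap.mem_ker.1 hx) i

/-! ### The normal form at a triple eigenvalue -/

/-- The eigenvector equations of `M ∈ S(G117)`, written out vertex by vertex. -/
lemma G117_rows {M : Matrix (Fin 6) (Fin 6) ℝ} (hM : inS G117 M) {l : ℝ} {x : Fin 6 → ℝ}
    (h : ∀ i, ∑ j, M i j * x j = l * x i) :
    M 0 0 * x 0 + M 0 1 * x 1 = l * x 0 ∧
    M 0 1 * x 0 + M 1 1 * x 1 + M 1 2 * x 2 + M 1 3 * x 3 + M 1 4 * x 4 + M 1 5 * x 5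
      = l * x 1 ∧
    M 1 2 * x 1 + M 2 2 * x 2 + M 2 3 * x 3 = l * x 2 ∧
    M 1 3 * x 1 + M 2 3 * x 2 + M 3 3 * x 3 = l * x 3 ∧
    M 1 4 * x 1 + M 4 4 * x 4 + M 4 5 * x 5 = l * x 4 ∧
    M 1 5 * x 1 + M 4 5 * x 4 + M 5 5 * x 5 = l * x 5 := by
  have z : ∀ i j : Fin 6, i ≠ j → ¬ G117.Adj i j → M i j = 0 := fun i j hij hn => by
    by_contra hne
    exact hn ((hM.2 i j hij).1 hne)
  have sy : ∀ i j, M j i = M i j := fun i j => hM.1.apply i j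
  have h02 : M 0 2 = 0 := z _ _ (by decide) (by simp [G117])
  have h03 : M 0 3 = 0 := z _ _ (by decide) (by simp [G117])
  have h04 : M 0 4 = 0 := z _ _ (by decide) (by simp [G117])
  have h05 : M 0 5 = 0 := z _ _ (by decide) (by simp [G117])
  have h24 : M 2 4 = 0 := z _ _ (by decide) (by simp [G117])
  have h25 : M 2 5 = 0 := z _ _ (by decide) (by simp [G117])
  have h34 : M 3 4 = 0 := z _ _ (by decide) (by simp [G117])
  have h35 : M 3 5 = 0 := z _ _ (by decide) (by simp [G117])
  simp only [Fin.sum_univ_six] at h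
  refine ⟨?_, ?_, ?_, ?_, ?_, ?_⟩
  · linear_combination h 0 - h02 * x 2 - h03 * x 3 - h04 * x 4 - h05 * x 5
  · linear_combination h 1 - sy 0 1 * x 0
  · linear_combination h 2 - sy 0 2 * x 0 - sy 1 2 * x 1 - h02 * x 0 - h24 * x 4 - h25 * x 5
  · linear_combination h 3 - sy 0 3 * x 0 - sy 1 3 * x 1 - sy 2 3 * x 2 - h03 * x 0
      - h34 * x 4 - h35 * x 5
  · linear_combination h 4 - sy 0 4 * x 0 - sy 1 4 * x 1 - sy 2 4 * x 2 - sy 3 4 * x 3 - h04 * x 0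
      - h24 * x 2 - h34 * x 3
  · linear_combination h 5 - sy 0 5 * x 0 - sy 1 5 * x 1 - sy 2 5 * x 2 - sy 3 5 * x 3
      - sy 4 5 * x 4 - h05 * x 0 - h25 * x 2 - h35 * x 3

lemma eq_zero_of_six {x : Fin 6 → ℝ} (h0 : x 0 = 0) (h1 : x 1 = 0) (h2 : x 2 = 0)
    (h3 : x 3 = 0) (h4 : x 4 = 0) (h5 : x 5 = 0) : x = 0 := by
  funext i
  fin_cases i <;> assumption

/-- A triangle block `[[n₂, k], [k, n₃]]` with border `(b₂, b₃)` that annihilate a common nonzero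
vector have rank one and are proportional to `(1, t)`. -/
lemma triangle_normal_form {n₂ k n₃ b₂ b₃ y z : ℝ} (hk : k ≠ 0) (hb : b₂ ≠ 0)
    (hyz : ¬ (y = 0 ∧ z = 0)) (e₂ : n₂ * y + k * z = 0) (e₃ : k * y + n₃ * z = 0)
    (e₁ : b₂ * y + b₃ * z = 0) :
    ∃ p t c : ℝ, p ≠ 0 ∧ t ≠ 0 ∧ c ≠ 0 ∧ n₂ = p ∧ k = p * t ∧ n₃ = p * t ^ 2 ∧ b₂ = p * c ∧
      b₃ = p * c * t := by
  have hy : y ≠ 0 := fun h => hyz ⟨h, by simpa [h, hk] using e₂⟩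
  have hz : z ≠ 0 := fun h => hyz ⟨by simpa [h, hk] using e₃, h⟩
  have hn : n₂ ≠ 0 := fun h => by simp [h, hk, hz] at e₂
  refine ⟨n₂, -y / z, b₂ / n₂, hn, by simp [hy, hz], by simp [hb, hn], rfl, ?_, ?_, ?_, ?_⟩
  · field_simp; linarith
  · field_simp
    linear_combination z * e₃ - y * e₂
  · field_simp
  · field_simp; linarith

/-- `M - l` is the matrix of the quadratic form
`a (x₀ + g x₁)² + p (x₂ + t x₃ + c x₁)² + q (x₄ + s x₅ + e x₁)²`. -/
def IsNormalForm (M : Matrix (Fin 6) (Fin 6) ℝ) (l a g p t c q s e : ℝ) : Prop :=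
  M 0 0 = l + a ∧ M 0 1 = a * g ∧ M 1 1 = l + a * g ^ 2 + p * c ^ 2 + q * e ^ 2 ∧
  (M 1 2 = p * c ∧ M 1 3 = p * c * t ∧ M 2 2 = l + p ∧ M 2 3 = p * t ∧ M 3 3 = l + p * t ^ 2) ∧
  (M 1 4 = q * e ∧ M 1 5 = q * e * s ∧ M 4 4 = l + q ∧ M 4 5 = q * s ∧ M 5 5 = l + q * s ^ 2)

/-- A triple eigenvalue `l` makes `M - l` a combination of three squares. -/
lemma G117_normal_form {M : Matrix (Fin 6) (Fin 6) ℝ} (hM : inS G117 M) {l : ℝ}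
    (h : 3 ≤ Module.finrank ℝ (eigsp M l)) :
    ∃ a g p t c q s e : ℝ, (a ≠ 0 ∧ g ≠ 0 ∧ p ≠ 0 ∧ t ≠ 0 ∧ c ≠ 0 ∧ q ≠ 0 ∧ s ≠ 0 ∧ e ≠ 0) ∧
      IsNormalForm M l a g p t c q s e := by
  have nz : ∀ i j : Fin 6, i ≠ j → G117.Adj i j → M i j ≠ 0 := fun i j hij hn =>
    (hM.2 i j hij).2 hn
  have h01 : M 0 1 ≠ 0 := nz _ _ (by decide) (by simp [G117])
  have h12 : M 1 2 ≠ 0 := nz _ _ (by decide) (by simp [G117])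
  have h14 : M 1 4 ≠ 0 := nz _ _ (by decide) (by simp [G117])
  have h23 : M 2 3 ≠ 0 := nz _ _ (by decide) (by simp [G117])
  have h45 : M 4 5 ≠ 0 := nz _ _ (by decide) (by simp [G117])
  -- A nonzero eigenvector `w` vanishing at 2 and 4 cannot vanish at the centre.
  obtain ⟨w, hw, hwv, hwe⟩ := exists_eigvec (k := 2) h ![2, 4]
  have w2 : w 2 = 0 := hwv 0
  have w4 : w 4 = 0 := hwv 1
  obtain ⟨r0, r1, r2, r3, r4, r5⟩ := G117_rows hM hwe
  simp only [w2, w4, mul_zero, add_zero] at r0 r1 r2 r3 r4 r5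
  have w1 : w 1 ≠ 0 := by
    intro w1
    have w3 : w 3 = 0 := by simpa [w1, h23] using r2
    have w5 : w 5 = 0 := by simpa [w1, h45] using r4
    have w0 : w 0 = 0 := by simpa [w1, w3, w5, h01] using r1
    exact hw (eq_zero_of_six w0 w1 w2 w3 w4 w5)
  have ha : M 0 0 - l ≠ 0 := by
    intro ha
    have : M 0 1 * w 1 = 0 := by linear_combination r0 - ha * w 0
    simp [h01, w1] at this
  -- Eigenvectors vanishing at the centre and at a vertex of one triangle live on the other one.
  obtain ⟨y, hy, hyv, hye⟩ := exists_eigvec (k := 2) h ![1, 4]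
  have y1 : y 1 = 0 := hyv 0
  have y4 : y 4 = 0 := hyv 1
  obtain ⟨u0, u1, u2, u3, u4, u5⟩ := G117_rows hM hye
  simp only [y1, y4, mul_zero, add_zero, zero_add] at u0 u1 u2 u3 u4 u5
  have y0 : y 0 = 0 := by
    have : (M 0 0 - l) * y 0 = 0 := by linear_combination u0
    simpa [ha] using this
  have y5 : y 5 = 0 := by simpa [h45] using u4
  simp only [y0, y5, mul_zero, add_zero, zero_add] at u1
  obtain ⟨p, t, c, hp, ht, hc, e1, e2, e3, e4, e5⟩ :=
    triangle_normal_form (n₂ := M 2 2 - l) (n₃ := M 3 3 - l) h23 h12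
      (fun hh => hy (eq_zero_of_six y0 y1 hh.1 hh.2 y4 y5))
      (by linear_combination u2) (by linear_combination u3) u1
  obtain ⟨z, hz, hzv, hze⟩ := exists_eigvec (k := 2) h ![1, 2]
  have z1 : z 1 = 0 := hzv 0
  have z2 : z 2 = 0 := hzv 1
  obtain ⟨v0, v1, v2, v3, v4, v5⟩ := G117_rows hM hze
  simp only [z1, z2, mul_zero, add_zero, zero_add] at v0 v1 v2 v3 v4 v5
  have z0 : z 0 = 0 := by
    have : (M 0 0 - l) * z 0 = 0 := by linear_combination v0
    simpa [ha] using this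
  have z3 : z 3 = 0 := by simpa [h23] using v2
  simp only [z0, z3, mul_zero, add_zero, zero_add] at v1
  obtain ⟨q, s, e, hq, hs, he, d1, d2, d3, d4, d5⟩ :=
    triangle_normal_form (n₂ := M 4 4 - l) (n₃ := M 5 5 - l) h45 h14
      (fun hh => hz (eq_zero_of_six z0 z1 z2 z3 hh.1 hh.2))
      (by linear_combination v4) (by linear_combination v5) v1
  refine ⟨M 0 0 - l, M 0 1 / (M 0 0 - l), p, t, c, q, s, e,
    ⟨ha, by simp [h01, ha], hp, ht, hc, hq, hs, he⟩, by ring, by field_simp, ?_,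
    ⟨e4, e5, by linear_combination e1, e2, by linear_combination e3⟩,
    ⟨d4, d5, by linear_combination d1, d2, by linear_combination d3⟩⟩
  -- The central entry is read off from the central row of `w`.
  obtain ⟨g, hg⟩ : ∃ g, M 0 1 = (M 0 0 - l) * g := ⟨M 0 1 / (M 0 0 - l), by field_simp⟩
  have hg' : M 0 1 / (M 0 0 - l) = g := by rw [hg]; field_simp
  rw [hg']
  have w0 : w 0 = -g * w 1 := by
    apply mul_left_cancel₀ ha
    linear_combination r0 - hg * w 1
  have w3 : t * w 3 = -c * w 1 := by
    apply mul_left_cancel₀ hp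
    linear_combination r2 - e2 * w 3 - e4 * w 1
  have w5 : s * w 5 = -e * w 1 := by
    apply mul_left_cancel₀ hq
    linear_combination r4 - d2 * w 5 - d4 * w 1
  apply mul_right_cancel₀ w1
  linear_combination r1 - e5 * w 3 - d5 * w 5 - p * c * w3 - q * e * w5 - hg * w 0
    - (M 0 0 - l) * g * w0

/-! ### The other eigenvalues -/

/-- The equations for an eigenvector `x` with eigenvalue `m`, after row reduction: `(M - l) x` is a
combination of three vectors, so for `m ≠ l` the vector `x` is determined by its coordinates at
`0`, `2` and `4`. -/
lemma IsNormalForm.rows {M : Matrix (Fin 6) (Fin 6) ℝ} {l a g p t c q s e : ℝ}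
    (hN : IsNormalForm M l a g p t c q s e) (hM : inS G117 M) {m : ℝ} {x : Fin 6 → ℝ}
    (h : ∀ i, ∑ j, M i j * x j = m * x i) :
    a * (x 0 + g * x 1) = (m - l) * x 0 ∧
    (m - l) * x 1 = (m - l) * (g * x 0 + c * x 2 + e * x 4) ∧
    p * (x 2 + t * x 3 + c * x 1) = (m - l) * x 2 ∧
    (m - l) * x 3 = (m - l) * (t * x 2) ∧
    q * (x 4 + s * x 5 + e * x 1) = (m - l) * x 4 ∧
    (m - l) * x 5 = (m - l) * (s * x 4) := by
  obtain ⟨r0, r1, r2, r3, r4, r5⟩ := G117_rows hM h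
  obtain ⟨h00, h01, h11, ⟨h12, h13, h22, h23, h33⟩, h14, h15, h44, h45, h55⟩ := hN
  simp only [h00, h01, h11, h12, h13, h22, h23, h33, h14, h15, h44, h45, h55] at r0 r1 r2 r3 r4 r5
  refine ⟨?_, ?_, ?_, ?_, ?_, ?_⟩
  · linear_combination r0
  · linear_combination -r1 + g * r0 + c * r2 + e * r4
  · linear_combination r2
  · linear_combination -r3 + t * r2
  · linear_combination r4
  · linear_combination -r5 + s * r4

/-- A double eigenvalue different from `l` determines the three coefficients of the form. -/
lemma G117_double_eigenvalue {M : Matrix (Fin 6) (Fin 6) ℝ} (hM : inS G117 M)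
    {l m a g p t c q s e : ℝ} (hN : IsNormalForm M l a g p t c q s e)
    (ha : a ≠ 0) (hg : g ≠ 0) (hc : c ≠ 0) (he : e ≠ 0)
    (hml : m - l ≠ 0) (h : 2 ≤ Module.finrank ℝ (eigsp M m)) :
    m - l = a ∧ m - l = p * (1 + t ^ 2) ∧ m - l = q * (1 + s ^ 2) := by
  obtain ⟨x, hx, hxv, hxe⟩ := exists_eigvec (k := 1) h ![0]
  have x0 : x 0 = 0 := hxv 0
  obtain ⟨r0, r1, r2, r3, r4, r5⟩ := hN.rows hM hxe
  have x1 : x 1 = 0 := by simpa [x0, ha, hg] using r0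
  replace r1 := mul_left_cancel₀ hml r1
  replace r3 := mul_left_cancel₀ hml r3
  replace r5 := mul_left_cancel₀ hml r5
  simp only [x0, x1, mul_zero, add_zero, zero_add] at r1 r2 r4
  have x2 : x 2 ≠ 0 := by
    intro x2
    have x4 : x 4 = 0 := by simpa [x2, he] using r1.symm
    exact hx (eq_zero_of_six x0 x1 x2 (by simp [r3, x2]) x4 (by simp [r5, x4]))
  have x4 : x 4 ≠ 0 := by
    intro x4
    simp [x4, hc, x2] at r1
  obtain ⟨y, hy, hyv, hye⟩ := exists_eigvec (k := 1) h ![2]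
  have y2 : y 2 = 0 := hyv 0
  have hp : m - l = p * (1 + t ^ 2) := by
    apply mul_right_cancel₀ x2
    linear_combination -r2 + p * t * r3
  have hq : m - l = q * (1 + s ^ 2) := by
    apply mul_right_cancel₀ x4
    linear_combination -r4 + q * s * r5
  have hp0 : p ≠ 0 := fun h0 => hml (by rw [hp, h0, zero_mul])
  obtain ⟨u0, u1, u2, u3, u4, u5⟩ := hN.rows hM hye
  replace u1 := mul_left_cancel₀ hml u1
  replace u3 := mul_left_cancel₀ hml u3
  replace u5 := mul_left_cancel₀ hml u5
  have y3 : y 3 = 0 := by simpa [y2] using u3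
  have y1 : y 1 = 0 := by simpa [y2, y3, hp0, hc] using u2
  simp only [y1, y2, mul_zero, add_zero] at u0 u1
  have y0 : y 0 ≠ 0 := by
    intro y0
    have y4 : y 4 = 0 := by simpa [y0, he] using u1.symm
    exact hy (eq_zero_of_six y0 y1 y2 y3 y4 (by simp [u5, y4]))
  exact ⟨mul_right_cancel₀ y0 u0.symm, hp, hq⟩

/-- In `S(G117)`, a triple eigenvalue cannot lie strictly between a double eigenvalue and
another eigenvalue. -/
lemma G117_no_separation {M : Matrix (Fin 6) (Fin 6) ℝ} (hM : inS G117 M) {l m k : ℝ}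
    (hl : (X - C l) ^ 3 ∣ M.charpoly) (hm : (X - C m) ^ 2 ∣ M.charpoly)
    (hk : (X - C k) ^ 1 ∣ M.charpoly) : ¬ (m - l) * (k - l) < 0 := by
  intro hneg
  have hml : m - l ≠ 0 := fun h => by simp [h] at hneg
  obtain ⟨a, g, p, t, c, q, s, e, ⟨ha, hg, -, -, hc, -, -, he⟩, hN⟩ :=
    G117_normal_form hM (le_finrank_eigsp hM.1 hl)
  obtain ⟨h1, h2, h3⟩ :=
    G117_double_eigenvalue hM hN ha hg hc he hml (le_finrank_eigsp hM.1 hm)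
  obtain ⟨x, hx, -, hxe⟩ := exists_eigvec (k := 0) (le_finrank_eigsp hM.1 hk) ![]
  obtain ⟨r0, r1, r2, r3, r4, r5⟩ := hN.rows hM hxe
  -- `(k - l) |x|²` is the value of the quadratic form at `x`.
  have key : (k - l) * ∑ i, x i ^ 2 = a * (x 0 + g * x 1) ^ 2
      + p * (x 2 + t * x 3 + c * x 1) ^ 2 + q * (x 4 + s * x 5 + e * x 1) ^ 2 := by
    simp only [Fin.sum_univ_six]
    linear_combination x 1 * r1 + x 3 * r3 + x 5 * r5 - (x 0 + g * x 1) * r0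
      - (x 2 + t * x 3 + c * x 1) * r2 - (x 4 + s * x 5 + e * x 1) * r4
  have hpos : 0 < ∑ i, x i ^ 2 := by
    obtain ⟨i, hi⟩ := Function.ne_iff.1 hx
    exact Finset.sum_pos' (fun j _ => sq_nonneg _) ⟨i, Finset.mem_univ i, sq_pos_iff.2 hi⟩
  have sa : 0 ≤ (m - l) * a := by rw [← h1]; exact mul_self_nonneg _
  have sp : 0 ≤ (m - l) * p := by
    rw [h2]; nlinarith [mul_nonneg (mul_self_nonneg p) (add_nonneg zero_le_one (sq_nonneg t))]
  have sq : 0 ≤ (m - l) * q := by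
    rw [h3]; nlinarith [mul_nonneg (mul_self_nonneg q) (add_nonneg zero_le_one (sq_nonneg s))]
  have hform : 0 ≤ (m - l) * (k - l) * ∑ i, x i ^ 2 := by
    rw [mul_assoc, key, mul_add, mul_add, ← mul_assoc, ← mul_assoc, ← mul_assoc]
    positivity
  exact absurd hform (not_le.2 (mul_neg_of_neg_of_pos hneg hpos))

theorem G117_not_132_231 :
    (¬ ∃ (M : Matrix (Fin 6) (Fin 6) ℝ) (l₁ l₂ l₃ : ℝ),
        inS G117 M ∧ l₁ < l₂ ∧ l₂ < l₃ ∧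
        M.charpoly = (X - C l₁) * (X - C l₂) ^ 3 * (X - C l₃) ^ 2) ∧
    (¬ ∃ (M : Matrix (Fin 6) (Fin 6) ℝ) (l₁ l₂ l₃ : ℝ),
        inS G117 M ∧ l₁ < l₂ ∧ l₂ < l₃ ∧
        M.charpoly = (X - C l₁) ^ 2 * (X - C l₂) ^ 3 * (X - C l₃)) := by
  constructor
  · rintro ⟨M, l₁, l₂, l₃, hM, h12, h23, hc⟩
    refine G117_no_separation (l := l₂) (m := l₃) (k := l₁) hM ?_ ?_ ?_
      (mul_neg_of_pos_of_neg (by linarith) (by linarith))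
    · exact ⟨(X - C l₁) * (X - C l₃) ^ 2, by rw [hc]; ring⟩
    · exact ⟨(X - C l₁) * (X - C l₂) ^ 3, by rw [hc]; ring⟩
    · exact ⟨(X - C l₂) ^ 3 * (X - C l₃) ^ 2, by rw [hc]; ring⟩
  · rintro ⟨M, l₁, l₂, l₃, hM, h12, h23, hc⟩
    refine G117_no_separation (l := l₂) (m := l₁) (k := l₃) hM ?_ ?_ ?_
      (mul_neg_of_neg_of_pos (by linarith) (by linarith))
    · exact ⟨(X - C l₁) ^ 2 * (X - C l₃), by rw [hc]; ring⟩
    · exact ⟨(X - C l₂) ^ 3 * (X - C l₃), by rw [hc]; ring⟩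
    · exact ⟨(X - C l₁) ^ 2 * (X - C l₂) ^ 3, by rw [hc]; ring⟩
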